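/- Semi-direct products of line segments factorize if and only if they are fiber products (quadrilateral case, Appendix B): for real parameters a and b, the rational-function identity (1/x − 1/(x + b·y − 1)) · (1/(a·x + y − 1) − 1/y) = (a·x + b·y − 1)/(x·y·(a·x + y − 1)·(x + b·y − 1)) holds for all real x, y with x ≠ 0, y ≠ 0, a·x + y − 1 ≠ 0, and x + b·y − 1 ≠ 0, if and only if a·b = 0. Equivalently: the canonical form of the quadrilateral bounded by x = 0, a·x + y − 1 = 0, x + b·y − 1 = 0, y = 0 (whose numerator/adjoint is 1 − a·x − b·y) factorizes into the product of the canonical forms of its two pairs of opposite facets if and only if one pair of opposite facets is parallel, i.e. the quadrilateral is a trapezoid (fiber-product geometry). -/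

import Mathlib

/-- Semi-direct products of line segments factorize if and only if they are fiber
products (quadrilateral case): the canonical form of the quadrilateral bounded by
`x = 0`, `a·x + y − 1 = 0`, `x + b·y − 1 = 0`, `y = 0` factorizes into the product
of the canonical forms of its two pairs of opposite facets if and only if
`a·b = 0` (the trapezoid / fiber-product case). -/
theorem quadrilateral_factorizes_iff_fiber (a b : ℝ) :
    (∀ x y : ℝ, x ≠ 0 → y ≠ 0 → a * x + y - 1 ≠ 0 → x + b * y - 1 ≠ 0 →
        (1 / x - 1 / (x + b * y - 1)) * (1 / (a * x + y - 1) - 1 / y)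
          = (a * x + b * y - 1) / (x * y * (a * x + y - 1) * (x + b * y - 1)))
      ↔ a * b = 0 := by
  have key : ∀ x y : ℝ, x ≠ 0 → y ≠ 0 → a * x + y - 1 ≠ 0 → x + b * y - 1 ≠ 0 →
      (1 / x - 1 / (x + b * y - 1)) * (1 / (a * x + y - 1) - 1 / y)
        = (a * x + b * y - 1 - a * b * (x * y))
          / (x * y * (a * x + y - 1) * (x + b * y - 1)) := by
    intro x y hx hy h2 h3
    rw [div_sub_div _ _ hx h3, div_sub_div _ _ h2 hy, div_mul_div_comm]
    congr 1 <;> ring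
  constructor
  · intro h
    obtain ⟨y, hy⟩ := Infinite.exists_notMem_finset ({0, 1 - 2 * a, -1 / b} : Finset ℝ)
    simp only [Finset.mem_insert, Finset.mem_singleton, not_or] at hy
    obtain ⟨hy0, hy1, hy2⟩ := hy
    have h2 : a * 2 + y - 1 ≠ 0 := fun e => hy1 (by linarith)
    have h3 : 2 + b * y - 1 ≠ 0 := by
      intro e
      have hb : b ≠ 0 := by
        rintro rfl
        norm_num at e
      apply hy2
      rw [eq_div_iff hb]
      linarith
    have e := h 2 y two_ne_zero hy0 h2 h3
    rw [key 2 y two_ne_zero hy0 h2 h3, div_left_inj' (by positivity)] at e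
    have e' : a * b * (2 * y) = 0 := by linarith
    exact (mul_eq_zero.mp e').resolve_right (mul_ne_zero two_ne_zero hy0)
  · intro hab x y hx hy h2 h3
    rw [key x y hx hy h2 h3, hab]
    simp
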